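/- For every θ ∈ ℝ, at least one of the following holds: for all odd k ≥ 1 the word s_k^θ = v_θ(1) v_θ(2) ... v_θ(F_k) is a cyclic rotation of s_k, or for all even k ≥ 0 the word s_k^θ is a cyclic rotation of s_k. -/

import Mathlib

/-- The Fibonacci substitution `S` on the alphabet `{0,1}` (encoded as `Bool`,
with `false` for `0` and `true` for `1`): `S(0) = 1`, `S(1) = 10`. -/
def fibS : Bool → List Bool
  | false => [true]
  | true => [true, false]

/-- The Fibonacci words `s_k = S^k(1)`; the word `s_k` has length `F_k = Nat.fib (k + 2)`. -/
def fibWord : ℕ → List Bool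
  | 0 => [true]
  | k + 1 => (fibWord k).flatMap fibS

/-- `ω = (√5 - 1)/2`, the inverse of the golden mean. -/
noncomputable def goldenOmega : ℝ := (Real.sqrt 5 - 1) / 2

/-- The Fibonacci potential sequence: `v_θ(n) = 1` if the fractional part of `nω + θ`
lies in `[1 - ω, 1)`, and `0` otherwise (letters encoded as `Bool`). -/
noncomputable def vTheta (θ : ℝ) (n : ℤ) : Bool :=
  if Int.fract ((n : ℝ) * goldenOmega + θ) ∈ Set.Ico (1 - goldenOmega) 1 then true else false

/-- The word `s_k^θ = v_θ(1) v_θ(2) ... v_θ(F_k)`. -/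
noncomputable def sTheta (θ : ℝ) (k : ℕ) : List Bool :=
  (List.range (Nat.fib (k + 2))).map fun i => vTheta θ ((i : ℤ) + 1)

/-!
The letter `v_θ(n)` is `1` exactly when `⌊nω + θ⌋ < ⌊(n + 1)ω + θ⌋`, and
`F_k ω - F_{k-1} = -ψ ^ (k + 2)` for `ψ = (1 - √5) / 2`. If the floor of `θ + ω` is unchanged by
subtracting `ψ ^ (k + 2)`, then over the whole window of length `F_k` the rotation by `ω` has the
same floors as a rotation by `F_{k-1} / F_k`, so `s_k^θ` is one period of a rational mechanical word
of that slope. Since `F_{k-1}` and `F_k` are coprime, changing the intercept only rotates this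
period. As `S` takes slope `p / q` to slope `q / (p + q)`, the word `s_k` is another such period.

The floor condition asks that the fractional part of `θ + ω` lie in
`[ψ ^ (k + 2), 1 + ψ ^ (k + 2))`, and `|ψ ^ (k + 2)| < 1 / 2`. As `ψ < 0`, this holds for all odd
`k` if the fractional part is below `1 / 2`, and for all even `k` otherwise.
-/

open scoped goldenRatio List

section Floor

variable {R : Type*} [CommRing R] [LinearOrder R] [IsStrictOrderedRing R] [FloorRing R] {x a : R}

lemma floor_lt_floor_add_iff : ⌊x⌋ < ⌊x + a⌋ ↔ 1 - a ≤ Int.fract x := by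
  rw [← Int.add_one_le_iff, Int.le_floor, Int.fract]
  push_cast
  constructor <;> intro <;> linarith

lemma floor_sub_eq_floor_iff :
    ⌊x - a⌋ = ⌊x⌋ ↔ a ≤ Int.fract x ∧ Int.fract x < 1 + a := by
  rw [Int.floor_eq_iff, Int.fract]
  constructor <;> rintro ⟨_, _⟩ <;> constructor <;> linarith

end Floor

section IsRotated

variable {α β : Type*} {l l' : List α}

lemma isRotated_flatMap (h : l ~r l') (f : α → List β) :
    l.flatMap f ~r l'.flatMap f := by
  obtain ⟨n, rfl⟩ := h
  rw [List.rotate_eq_drop_append_take_mod, List.flatMap_append]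
  nth_rw 1 [← List.take_append_drop (n % l.length) l, List.flatMap_append]
  exact List.isRotated_append

lemma exists_lt_length_eq_rotate (h : l ~r l') (hl : l ≠ []) :
    ∃ i < l.length, l' = l.rotate i := by
  obtain ⟨n, rfl⟩ := h
  exact ⟨n % l.length, Nat.mod_lt _ (List.length_pos_iff.2 hl), (List.rotate_mod l n).symm⟩

end IsRotated

section MechanicalWord

/-- The `n`-th letter of the rational mechanical word of slope `p / q` and intercept `r / q`:
it records whether the integer part of `(n * p + r) / q` jumps between `n` and `n + 1`. -/
def mechanicalLetter (p q r n : ℤ) : Bool :=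
  decide ((n * p + r) / q < ((n + 1) * p + r) / q)

/-- One period of the rational mechanical word of slope `p / q` and intercept `r / q`. -/
def mechanicalWord (p : ℤ) (q : ℕ) (r : ℤ) : List Bool :=
  (List.range q).map fun n : ℕ => mechanicalLetter p q r n

@[simp]
lemma length_mechanicalWord (p : ℤ) (q : ℕ) (r : ℤ) : (mechanicalWord p q r).length = q := by
  simp [mechanicalWord]

lemma mechanicalLetter_congr {p q r r' n n' : ℤ} (h : n * p + r ≡ n' * p + r' [ZMOD q]) :
    mechanicalLetter p q r n = mechanicalLetter p q r' n' := by
  rcases eq_or_ne q 0 with rfl | hq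
  · simp [mechanicalLetter]
  obtain ⟨t, ht⟩ := h.dvd
  have hn : n' * p + r' = n * p + r + q * t := by linear_combination ht
  have hn_succ : (n' + 1) * p + r' = (n + 1) * p + r + q * t := by linear_combination ht
  simp only [mechanicalLetter, hn, hn_succ, Int.add_mul_ediv_left _ _ hq, add_lt_add_iff_right]

lemma exists_lt_natCast_mul_modEq {p : ℤ} {q : ℕ} (hq : 0 < q) (hpq : IsCoprime p q) (a : ℤ) :
    ∃ i < q, i * p ≡ a [ZMOD q] := by
  obtain ⟨u, v, huv⟩ := hpq
  obtain ⟨i, hiq, hi⟩ := Int.existsUnique_equiv_nat (a * u) (mod_cast hq : (0 : ℤ) < q)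
  refine ⟨i, mod_cast hiq, (hi.mul_right p).trans (Int.modEq_iff_dvd.2 ⟨a * v, ?_⟩)⟩
  linear_combination -a * huv

lemma mechanicalWord_isRotated {p : ℤ} {q : ℕ} (hq : 0 < q) (hpq : IsCoprime p q) (r r' : ℤ) :
    mechanicalWord p q r ~r mechanicalWord p q r' := by
  obtain ⟨i, -, hi⟩ := exists_lt_natCast_mul_modEq hq hpq (r' - r)
  refine ⟨i, List.ext_getElem (by simp) fun j _ _ => ?_⟩
  simp only [mechanicalWord, List.getElem_rotate, List.getElem_map, List.getElem_range,
    List.length_map, List.length_range]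
  apply mechanicalLetter_congr
  calc ((j + i) % q : ℕ) * p + r
      ≡ (j + i) * p + r [ZMOD q] := by
        push_cast
        exact ((Int.mod_modEq _ _).mul_right p).add_right r
    _ ≡ j * p + r' [ZMOD q] := by
        convert hi.add_left (j * p + r) using 1 <;> ring

end MechanicalWord

section RationalApproximation

lemma add_one_ediv_of_not_dvd {a b : ℤ} (hb : 0 < b) (h : ¬b ∣ a + 1) :
    (a + 1) / b = a / b := by
  have hne : a + 1 ≠ a / b * b + b := fun h' => h ⟨a / b + 1, by linear_combination h'⟩
  have := Int.ediv_mul_le a hb.ne'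
  have := Int.lt_ediv_add_one_mul_self a hb
  rw [Int.ediv_eq_iff_of_pos hb]
  constructor <;> grind

lemma exists_forall_add_ediv_eq {p : ℤ} {q : ℕ} (hq : 0 < q) (hpq : IsCoprime p q) {c : ℕ → ℤ}
    (hosc : ∀ i ≤ q, ∀ j ≤ q, c i ≤ c j + 1) (hclosed : c q / q = c 0 / q) :
    ∃ r : ℤ, ∀ j ≤ q, (j * p + c j) / q = (j * p + r) / q := by
  have hq' : (0 : ℤ) < q := mod_cast hq
  obtain ⟨i, hi, hmin⟩ := Finset.exists_min_image (Finset.range (q + 1)) c ⟨0, by simp⟩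
  have hc : ∀ j ≤ q, c j = c i ∨ c j = c i + 1 := fun j hj => by
    have := hmin j (by grind)
    have := hosc j hj i (by grind)
    omega
  -- Replacing `c i` by `c i + 1` affects the quotient only at the indices `≡ J` modulo `q`.
  obtain ⟨J, hJq, hJ⟩ := exists_lt_natCast_mul_modEq hq hpq (-(c i + 1))
  refine ⟨c J, fun j hj => ?_⟩
  by_cases hdvd : (q : ℤ) ∣ j * p + c i + 1
  · have hjJ : J ≡ j [MOD q] := by
      refine Nat.modEq_iff_dvd.2 (hpq.symm.dvd_of_dvd_mul_right ?_)
      convert hdvd.add hJ.dvd using 1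
      ring
    rcases hj.eq_or_lt with rfl | hjq
    · obtain rfl : J = 0 := by simpa [Nat.ModEq, Nat.mod_eq_of_lt hJq] using hjJ
      simp only [Int.mul_add_ediv_left _ _ hq'.ne', hclosed]
    · rw [hjJ.eq_of_lt_of_lt hJq hjq]
  · have hsucc := add_one_ediv_of_not_dvd hq' hdvd
    rcases hc j hj with h | h <;> rcases hc J hJq.le with h' | h' <;>
      simp only [h, h', ← add_assoc, hsucc]

variable {K : Type*} [Field K] [LinearOrder K] [IsStrictOrderedRing K] [FloorRing K]
  {p : ℤ} {q : ℕ} {α y : K}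

lemma exists_forall_floor_eq_ediv (hq : 0 < q) (hpq : IsCoprime p q)
    (hα : q * |q * α - p| < 1) (hclosed : ⌊q * α + y⌋ = p + ⌊y⌋) :
    ∃ r : ℤ, ∀ j : ℕ, j ≤ q → ⌊j * α + y⌋ = (j * p + r) / q := by
  have hq' : (q : ℤ) ≠ 0 := mod_cast hq.ne'
  set ε := q * α - p with hε
  let c : ℕ → ℤ := fun j => ⌊q * y + j * ε⌋
  have hfloor (j : ℕ) : ⌊j * α + y⌋ = (j * p + c j) / q := by
    have : j * α + y = ((j * p : ℤ) + (q * y + j * ε)) / q := by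
      rw [eq_div_iff (mod_cast hq.ne')]
      push_cast
      linear_combination (-(j : K)) * hε
    rw [this, Int.floor_div_natCast, Int.floor_intCast_add]
  have hosc : ∀ i ≤ q, ∀ j ≤ q, c i ≤ c j + 1 := fun i hi j hj => by
    have hij : (i - j : K) * ε < 1 := calc
      (i - j : K) * ε ≤ |(i - j : K)| * |ε| := (le_abs_self _).trans_eq (abs_mul _ _)
      _ ≤ q * |ε| := by
        gcongr
        exact abs_sub_le_of_nonneg_of_le (by positivity) (mod_cast hi) (by positivity)
          (mod_cast hj)
      _ < 1 := hα
    rw [← Int.floor_add_one]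
    exact Int.floor_le_floor (by linarith)
  have hcq : c q / q = c 0 / q := by
    have hfloor_zero := hfloor 0
    have hfloor_q := hfloor q
    simp only [Nat.cast_zero, zero_mul, zero_add] at hfloor_zero
    rw [hclosed, Int.mul_add_ediv_left _ _ hq', hfloor_zero] at hfloor_q
    exact (add_left_cancel hfloor_q).symm
  obtain ⟨r, hr⟩ := exists_forall_add_ediv_eq hq hpq hosc hcq
  exact ⟨r, fun j hj => (hfloor j).trans (hr j hj)⟩

lemma exists_map_floor_lt_floor_eq_mechanicalWord (hq : 0 < q) (hpq : IsCoprime p q)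
    (hα : q * |q * α - p| < 1) (hclosed : ⌊q * α + y⌋ = p + ⌊y⌋) :
    ∃ r : ℤ, ((List.range q).map fun j : ℕ => decide (⌊j * α + y⌋ < ⌊(j + 1) * α + y⌋)) =
      mechanicalWord p q r := by
  obtain ⟨r, hr⟩ := exists_forall_floor_eq_ediv hq hpq hα hclosed
  refine ⟨r, List.map_congr_left fun j hj => ?_⟩
  have hjq : j < q := List.mem_range.1 hj
  have hj_succ := hr (j + 1) hjq
  push_cast at hj_succ
  rw [mechanicalLetter, hr j hjq.le, hj_succ]

end RationalApproximation

section Substitution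

variable {p q : ℤ}

lemma ediv_lt_ediv_iff_exists {a b c : ℤ} (hc : 0 < c) :
    a / c < b / c ↔ ∃ m, a < m * c ∧ m * c ≤ b := by
  simp_rw [← Int.ediv_lt_iff_lt_mul hc, ← Int.le_ediv_iff_mul_le hc]
  exact ⟨fun h => ⟨_, h, le_rfl⟩, fun ⟨_, ha, hb⟩ => ha.trans_le hb⟩

-- The image under `S` of the first `m` letters of slope `p / q` has length `m + m * p / q`, so the
-- letters `true` of slope `q / (p + q)` mark the starts of the images of single letters.
lemma mechanicalLetter_neg_one_eq_true_iff (hp : 0 ≤ p) (hq : 0 < q) {n : ℤ} :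
    mechanicalLetter q (p + q) (-1) n = true ↔ ∃ m, m + m * p / q = n := by
  rw [mechanicalLetter, decide_eq_true_iff, ediv_lt_ediv_iff_exists (by positivity)]
  refine exists_congr fun m => ?_
  rw [← eq_sub_iff_add_eq', Int.ediv_eq_iff_of_pos hq]
  constructor <;> rintro ⟨_, _⟩ <;> constructor <;> linarith

lemma mechanicalLetter_neg_one_eq_false_of_ediv_lt (hp : 0 ≤ p) (hq : 0 < q) {m : ℤ}
    (hjump : m * p / q < (m + 1) * p / q) :
    mechanicalLetter q (p + q) (-1) (m + m * p / q + 1) = false := by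
  have hmono : Monotone fun m : ℤ => m * p / q := fun a b hab =>
    Int.ediv_le_ediv hq (mul_le_mul_of_nonneg_right hab hp)
  rw [← Bool.not_eq_true, mechanicalLetter_neg_one_eq_true_iff hp hq]
  rintro ⟨m', hm'⟩
  rcases le_or_gt m' m with h | h
  · have := hmono h
    grind
  · have := hmono (Int.add_one_le_of_lt h)
    grind

lemma flatMap_fibS_map_range_mechanicalLetter {p q : ℕ} (hq : 0 < q) (hpq : p ≤ q) (m : ℕ) :
    ((List.range m).map fun n : ℕ => mechanicalLetter p q 0 n).flatMap fibS =
      (List.range (m + m * p / q)).map fun n : ℕ => mechanicalLetter q (p + q) (-1) n := by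
  induction m with
  | zero => simp
  | succ m ih =>
    have hq' : (0 : ℤ) < q := mod_cast hq
    have hstart := (mechanicalLetter_neg_one_eq_true_iff p.cast_nonneg hq').2 ⟨m, rfl⟩
    have hle : m * p / q ≤ (m + 1) * p / q := by gcongr; simp
    have hle_succ : (m + 1) * p / q ≤ m * p / q + 1 := by
      rw [← Nat.add_div_right _ hq, add_one_mul]
      gcongr
    rw [List.range_succ, List.map_append, List.flatMap_append, ih]
    by_cases hjump : m * p / q < (m + 1) * p / q
    · have hletter : mechanicalLetter p q 0 m = true := by
        simpa [mechanicalLetter] using mod_cast hjump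
      have hend := mechanicalLetter_neg_one_eq_false_of_ediv_lt (m := m) p.cast_nonneg hq'
        (mod_cast hjump)
      rw [show (m + 1) * p / q = m * p / q + 1 by omega, add_add_add_comm, ← add_assoc,
        List.range_succ, List.range_succ]
      simp [hletter, hstart, hend, fibS]
    · have hletter : mechanicalLetter p q 0 m = false := by
        simpa [mechanicalLetter] using mod_cast not_lt.1 hjump
      rw [show (m + 1) * p / q = m * p / q by omega, add_right_comm, List.range_succ]
      simp [hletter, hstart, fibS]

lemma flatMap_fibS_mechanicalWord {p q : ℕ} (hq : 0 < q) (hpq : p ≤ q) :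
    (mechanicalWord p q 0).flatMap fibS = mechanicalWord q (p + q) (-1) := by
  have h := flatMap_fibS_map_range_mechanicalLetter hq hpq q
  rwa [Nat.mul_div_cancel_left p hq, add_comm q p] at h

lemma isCoprime_fib_fib_succ (n : ℕ) : IsCoprime (Nat.fib n : ℤ) (Nat.fib (n + 1)) :=
  Nat.isCoprime_iff_coprime.2 (Nat.fib_coprime_fib_succ n)

lemma fibWord_isRotated_mechanicalWord (k : ℕ) (r : ℤ) :
    fibWord k ~r mechanicalWord (Nat.fib (k + 1)) (Nat.fib (k + 2)) r := by
  induction k generalizing r with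
  | zero => simp [fibWord, mechanicalWord, mechanicalLetter, List.IsRotated.refl]
  | succ k ih =>
    have hsubst := isRotated_flatMap (ih 0) fibS
    rw [flatMap_fibS_mechanicalWord (by simp) (Nat.fib_mono (by simp)),
      ← Nat.fib_add_two] at hsubst
    exact hsubst.trans (mechanicalWord_isRotated (by simp) (isCoprime_fib_fib_succ _) _ _)

lemma length_fibWord (k : ℕ) : (fibWord k).length = Nat.fib (k + 2) := by
  simpa using (fibWord_isRotated_mechanicalWord k 0).perm.length_eq

end Substitution

lemma vTheta_eq (θ : ℝ) (n : ℤ) :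
    vTheta θ n = decide (⌊n * goldenOmega + θ⌋ < ⌊(n + 1) * goldenOmega + θ⌋) := by
  have hshift : (n + 1) * goldenOmega + θ = n * goldenOmega + θ + goldenOmega := by ring
  rw [hshift]
  simp [vTheta, floor_lt_floor_add_iff, Int.fract_lt_one]

lemma sTheta_eq_map (θ : ℝ) (k : ℕ) :
    sTheta θ k = (List.range (Nat.fib (k + 2))).map fun i : ℕ => vTheta θ (i + 1) :=
  List.map_flatMap.trans List.map_eq_flatMap.symm

lemma goldenOmega_eq_neg_goldenConj : goldenOmega = -ψ := by
  rw [goldenOmega, Real.goldenConj]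
  ring

lemma fib_mul_goldenOmega_sub_fib (n : ℕ) :
    Nat.fib (n + 1) * goldenOmega - Nat.fib n = -ψ ^ (n + 1) := by
  rw [goldenOmega_eq_neg_goldenConj, ← Real.goldenConj_mul_fib_succ_add_fib]
  ring

lemma fib_mul_abs_goldenConj_pow_lt_one (n : ℕ) : Nat.fib n * |ψ ^ n| < 1 := by
  rcases n with - | n
  · simp
  have hψ : |ψ ^ (n + 1)| = (φ ^ (n + 1))⁻¹ := by
    rw [abs_pow, abs_of_neg Real.goldenConj_neg, ← Real.inv_goldenRatio, inv_pow]
  have hφ := Real.one_lt_goldenRatio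
  have hfib : (0 : ℝ) < Nat.fib (n + 1) := by simp
  rw [hψ, ← div_eq_mul_inv, div_lt_one (by positivity), ← Real.goldenRatio_mul_fib_succ_add_fib]
  have : (0 : ℝ) ≤ Nat.fib n := by positivity
  nlinarith

lemma abs_goldenConj_pow_lt_half {n : ℕ} (hn : 2 ≤ n) : |ψ ^ n| < 1 / 2 := by
  have hneg := Real.goldenConj_neg
  have hgt := Real.neg_one_lt_goldenConj
  have hsq := Real.goldenConj_sq
  calc |ψ ^ n| = |ψ| ^ n := abs_pow ψ n
    _ ≤ |ψ| ^ 2 := pow_le_pow_of_le_one (abs_nonneg ψ) (abs_le.2 ⟨hgt.le, by linarith⟩) hn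
    _ = ψ + 1 := by rw [sq_abs, hsq]
    _ < 1 / 2 := by nlinarith

lemma fibWord_isRotated_sTheta {θ : ℝ} {k : ℕ}
    (hδ : ψ ^ (k + 2) ≤ Int.fract (θ + goldenOmega))
    (hδ' : Int.fract (θ + goldenOmega) < 1 + ψ ^ (k + 2)) :
    fibWord k ~r sTheta θ k := by
  have happrox := fib_mul_goldenOmega_sub_fib (k + 1)
  have hclosed : ⌊Nat.fib (k + 2) * goldenOmega + (θ + goldenOmega)⌋ =
      Nat.fib (k + 1) + ⌊θ + goldenOmega⌋ := by
    rw [← floor_sub_eq_floor_iff.2 ⟨hδ, hδ'⟩, ← Int.floor_natCast_add]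
    congr 1
    linear_combination happrox
  obtain ⟨r, hr⟩ := exists_map_floor_lt_floor_eq_mechanicalWord (by simp)
    (isCoprime_fib_fib_succ (k + 1)) (α := goldenOmega)
    (by simpa [happrox] using fib_mul_abs_goldenConj_pow_lt_one (k + 2)) hclosed
  have hsTheta : sTheta θ k = mechanicalWord (Nat.fib (k + 1)) (Nat.fib (k + 2)) r := by
    rw [← hr, sTheta_eq_map]
    refine List.map_congr_left fun j _ => ?_
    rw [vTheta_eq]
    push_cast
    congr! 3 <;> ring
  rw [hsTheta]
  exact fibWord_isRotated_mechanicalWord k r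

/-- For every `θ ∈ ℝ`, either for all odd `k ≥ 1` the word `s_k^θ` is a cyclic rotation of
`s_k`, or for all even `k ≥ 0` the word `s_k^θ` is a cyclic rotation of `s_k`.
(Here `u.rotate i = u_{i+1} ... u_n u_1 ... u_i` and `F_k = Nat.fib (k + 2)`.) -/
theorem sTheta_cyclic_rotation (θ : ℝ) :
    (∀ k, Odd k → ∃ i < Nat.fib (k + 2), sTheta θ k = (fibWord k).rotate i) ∨
    (∀ k, Even k → ∃ i < Nat.fib (k + 2), sTheta θ k = (fibWord k).rotate i) := by
  have hrot (k : ℕ) (hδ : ψ ^ (k + 2) ≤ Int.fract (θ + goldenOmega))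
      (hδ' : Int.fract (θ + goldenOmega) < 1 + ψ ^ (k + 2)) :
      ∃ i < Nat.fib (k + 2), sTheta θ k = (fibWord k).rotate i := by
    rw [← length_fibWord]
    refine exists_lt_length_eq_rotate (fibWord_isRotated_sTheta hδ hδ') ?_
    simp [← List.length_pos_iff, length_fibWord]
  have hsmall (k : ℕ) : |ψ ^ (k + 2)| < 1 / 2 := abs_goldenConj_pow_lt_half (by simp)
  rcases lt_or_ge (Int.fract (θ + goldenOmega)) (1 / 2) with hθ | hθ
  · refine .inl fun k hk => hrot k ?_ ?_
    · exact ((hk.add_even even_two).pow_neg Real.goldenConj_neg).le.trans (Int.fract_nonneg _)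
    · linarith [(abs_lt.1 (hsmall k)).1]
  · refine .inr fun k hk => hrot k ?_ ?_
    · exact ((abs_lt.1 (hsmall k)).2.trans_le hθ).le
    · linarith [Int.fract_lt_one (θ + goldenOmega), (hk.add even_two).pow_nonneg ψ]
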